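/- Let d ≥ 2 and let μ = (μ_n), σ = (σ_n) be sequences of positive integers satisfying Condition (C1) and Condition (C3). Then there exists ε₀ > 0 depending only on d, μ, σ such that for any λ₀ ∈ ℕ* and any renormalization scheme ℛ of dimension d associated to (λ₀,μ,σ) that satisfies Condition (C2) and Condition (C4) for ε₀, one has sup_{u∈𝕃_n} P((𝒜^{(n)}_u)^c) < 2^{−2^n} for every n ∈ ℕ. -/

import Mathlib

open MeasureTheory ProbabilityTheory Set

noncomputable section

/-- The scale sequence `λ_0 = lam0`, `λ_{n+1} = λ_n μ_n`. -/
def lamSeq (lam0 : ℕ) (μ : ℕ → ℕ) : ℕ → ℕ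
  | 0 => lam0
  | n + 1 => lamSeq lam0 μ n * μ n

/-- The lattice `𝕃 = L ℤ^d` inside `ℤ^d`. -/
def latt (d L : ℕ) : Set (Fin d → ℤ) := {u | ∀ i, (L : ℤ) ∣ u i}

/-- Sup norm on `ℤ^d`. -/
def normInfV {d : ℕ} (v : Fin d → ℤ) : ℕ := Finset.univ.sup fun i => (v i).natAbs

/-- ℓ¹ norm on `ℤ^d`. -/
def norm1V {d : ℕ} (v : Fin d → ℤ) : ℕ := ∑ i, (v i).natAbs

/-- `Λ_n(u) = (u + [0, λ_n)^d) ∩ 𝕃_{n-1}`. -/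
def lamBox {d : ℕ} (lam0 : ℕ) (μ : ℕ → ℕ) (n : ℕ) (u : Fin d → ℤ) : Set (Fin d → ℤ) :=
  {v | v ∈ latt d (lamSeq lam0 μ (n - 1)) ∧
    ∀ i, u i ≤ v i ∧ v i < u i + (lamSeq lam0 μ n : ℤ)}

/-- A renormalization scheme: a collection of seed events (indexed by `𝕃₀`)
and of auxiliary events (indexed by `𝕃_n`, `n ≥ 1`). -/
structure RenormScheme (Ω : Type*) (d : ℕ) where
  seed : (Fin d → ℤ) → Set Ω
  aux : ℕ → (Fin d → ℤ) → Set Ω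

/-- The recursively defined events `𝒜^{(n)}_u` of a renormalization scheme. -/
def Aev {Ω : Type*} {d : ℕ} (lam0 : ℕ) (μ σ : ℕ → ℕ) (S : RenormScheme Ω d) :
    ℕ → (Fin d → ℤ) → Set Ω
  | 0, u => S.seed u
  | n + 1, u =>
    S.aux (n + 1) u ∩
      ⋂ (u₁ : Fin d → ℤ) (u₂ : Fin d → ℤ) (_ : u₁ ∈ lamBox lam0 μ (n + 1) u)
        (_ : u₂ ∈ lamBox lam0 μ (n + 1) u)
        (_ : 5 * σ n * lamSeq lam0 μ n ≤ normInfV (u₁ - u₂)),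
        (Aev lam0 μ σ S n u₁ ∪ Aev lam0 μ σ S n u₂)

/-- Condition (C1): `μ_n ≥ 100 σ_n` and `σ_n ≥ 2`. -/
def Cond1 (μ σ : ℕ → ℕ) : Prop := ∀ n, 100 * σ n ≤ μ n ∧ 2 ≤ σ n

/-- The unique point `w ∈ Lℤ^d` with `v ∈ w + [0, L)^d`. -/
def parentV {d : ℕ} (L : ℕ) (v : Fin d → ℤ) : Fin d → ℤ :=
  fun i => (L : ℤ) * (Int.ediv (v i) (L : ℤ))

/-- The renormalization sequence of `u ∈ 𝕃_m`: `renSeq lam0 μ m u j ∈ 𝕃_{m+j}`. -/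
def renSeq {d : ℕ} (lam0 : ℕ) (μ : ℕ → ℕ) (m : ℕ) (u : Fin d → ℤ) : ℕ → (Fin d → ℤ)
  | 0 => u
  | j + 1 => parentV (lamSeq lam0 μ (m + j + 1)) (renSeq lam0 μ m u j)

/-- The event that `u ∈ 𝕃_m` is good up to scale `n`. -/
def GoodUpTo {Ω : Type*} {d : ℕ} (lam0 : ℕ) (μ σ : ℕ → ℕ) (S : RenormScheme Ω d)
    (m n : ℕ) (u : Fin d → ℤ) : Set Ω :=
  ⋂ k ∈ Finset.Icc m n, Aev lam0 μ σ S k (renSeq lam0 μ m u (k - m))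

/-- The box `u + [-r, r]^d ⊆ ℝ^d` (formal support of seed and auxiliary events). -/
def suppBox {d : ℕ} (u : Fin d → ℤ) (r : ℕ) : Set (Fin d → ℝ) :=
  {x | ∀ i, |x i - (u i : ℝ)| ≤ (r : ℝ)}

/-- The sub-collection of seed and auxiliary events whose formal support is contained
in `D`. -/
def schemeEventsIn {Ω : Type*} {d : ℕ} (lam0 : ℕ) (μ σ : ℕ → ℕ) (S : RenormScheme Ω d)
    (D : Set (Fin d → ℝ)) : Set (Set Ω) :=
  {E | (∃ u ∈ latt d (lamSeq lam0 μ 0), E = S.seed u ∧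
          suppBox u (σ 0 * lamSeq lam0 μ 0) ⊆ D) ∨
       (∃ n : ℕ, 1 ≤ n ∧ ∃ u ∈ latt d (lamSeq lam0 μ n), E = S.aux n u ∧
          suppBox u (σ n * lamSeq lam0 μ n) ⊆ D)}

/-- Condition (C2): collections of seed/auxiliary events with disjoint formal supports
are independent. -/
def Cond2 {Ω : Type*} [MeasureSpace Ω] {d : ℕ} (lam0 : ℕ) (μ σ : ℕ → ℕ)
    (S : RenormScheme Ω d) : Prop :=
  ∀ D₁ D₂ : Set (Fin d → ℝ), Disjoint D₁ D₂ →
    ProbabilityTheory.Indep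
      (MeasurableSpace.generateFrom (schemeEventsIn lam0 μ σ S D₁))
      (MeasurableSpace.generateFrom (schemeEventsIn lam0 μ σ S D₂)) ℙ


lemma lamSeq_pos {lam0 : ℕ} {μ : ℕ → ℕ} (h0 : 0 < lam0) (hμ : ∀ n, 0 < μ n) (n : ℕ) :
    0 < lamSeq lam0 μ n := by
  induction n with
  | zero => exact h0
  | succ n ih => exact Nat.mul_pos ih (hμ n)

lemma suppBox_sub {d : ℕ} {lam0 : ℕ} {μ σ : ℕ → ℕ} (hC1 : Cond1 μ σ) (n : ℕ)
    (u v : Fin d → ℤ) (hv : v ∈ lamBox lam0 μ (n + 1) u) :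
    suppBox v (σ n * lamSeq lam0 μ n) ⊆ suppBox u (σ (n + 1) * lamSeq lam0 μ (n + 1)) := by
  intro x hx i
  have h1 := abs_le.1 (hx i)
  obtain ⟨h2, h3⟩ := hv.2 i
  have h2' : (u i : ℝ) ≤ v i := by exact_mod_cast h2
  have h3' : (v i : ℝ) < u i + (lamSeq lam0 μ (n + 1) : ℕ) := by exact_mod_cast h3
  have h4 : σ n * lamSeq lam0 μ n ≤ lamSeq lam0 μ (n + 1) := by
    have := (hC1 n).1
    change _ ≤ lamSeq lam0 μ n * μ n
    rw [mul_comm]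
    exact Nat.mul_le_mul_left _ (by omega)
  have h5 : 2 * lamSeq lam0 μ (n + 1) ≤ σ (n + 1) * lamSeq lam0 μ (n + 1) :=
    Nat.mul_le_mul_right _ (hC1 (n + 1)).2
  have h4' : ((σ n * lamSeq lam0 μ n : ℕ) : ℝ) ≤ (lamSeq lam0 μ (n + 1) : ℕ) := by
    exact_mod_cast h4
  have h5' : 2 * ((lamSeq lam0 μ (n + 1) : ℕ) : ℝ)
      ≤ ((σ (n + 1) * lamSeq lam0 μ (n + 1) : ℕ) : ℝ) := by
    exact_mod_cast h5
  rw [abs_le]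
  constructor <;> linarith [h1.1, h1.2]

lemma Aev_meas {Ω : Type*} {d : ℕ} {lam0 : ℕ} {μ σ : ℕ → ℕ} (hC1 : Cond1 μ σ)
    (S : RenormScheme Ω d) (D : Set (Fin d → ℝ)) (n : ℕ) : ∀ u ∈ latt d (lamSeq lam0 μ n),
    suppBox u (σ n * lamSeq lam0 μ n) ⊆ D →
    MeasurableSet[MeasurableSpace.generateFrom (schemeEventsIn lam0 μ σ S D)]
      (Aev lam0 μ σ S n u) := by
  induction n with
  | zero =>
    intro u hu hD
    exact MeasurableSpace.measurableSet_generateFrom (Or.inl ⟨u, hu, rfl, hD⟩)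
  | succ n ih =>
    intro u hu hD
    let _ := MeasurableSpace.generateFrom (schemeEventsIn lam0 μ σ S D)
    refine MeasurableSet.inter
      (MeasurableSpace.measurableSet_generateFrom
        (Or.inr ⟨n + 1, by omega, u, hu, rfl, hD⟩)) ?_
    refine MeasurableSet.iInter fun u₁ => MeasurableSet.iInter fun u₂ =>
      MeasurableSet.iInter fun h₁ => MeasurableSet.iInter fun h₂ =>
      MeasurableSet.iInter fun _ => MeasurableSet.union ?_ ?_
    · exact ih u₁ h₁.1 ((suppBox_sub hC1 n u u₁ h₁).trans hD)
    · exact ih u₂ h₂.1 ((suppBox_sub hC1 n u u₂ h₂).trans hD)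

lemma suppBox_disj {d : ℕ} (u v : Fin d → ℤ) (r : ℕ) (hr : 0 < r)
    (h : 5 * r ≤ normInfV (u - v)) : Disjoint (suppBox u r) (suppBox v r) := by
  rw [Set.disjoint_left]
  intro x hx hy
  have h2 : normInfV (u - v) ≤ 2 * r := by
    refine Finset.sup_le fun i _ => ?_
    have h1 := abs_le.1 (hx i)
    have h2 := abs_le.1 (hy i)
    have h3 : ((u i - v i : ℤ) : ℝ) ≤ ((2 * r : ℕ) : ℤ) := by push_cast; linarith [h1.1, h2.2]
    have h4 : (-((2 * r : ℕ) : ℤ) : ℝ) ≤ ((u i - v i : ℤ) : ℝ) := by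
      push_cast; linarith [h1.2, h2.1]
    have h3' : u i - v i ≤ ((2 * r : ℕ) : ℤ) := by exact_mod_cast h3
    have h4' : -((2 * r : ℕ) : ℤ) ≤ u i - v i := by exact_mod_cast h4
    simp only [Pi.sub_apply]
    omega
  omega

lemma lamBox_param {d : ℕ} {lam0 : ℕ} {μ : ℕ → ℕ} (h0 : 0 < lam0) (hμ : ∀ n, 0 < μ n)
    (n : ℕ) (u v : Fin d → ℤ) (hu : u ∈ latt d (lamSeq lam0 μ (n + 1)))
    (hv : v ∈ lamBox lam0 μ (n + 1) u) :
    ∃ k : Fin d → Fin (μ n), v = fun i => u i + (lamSeq lam0 μ n : ℤ) * ((k i : ℕ) : ℤ) := by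
  have hl := lamSeq_pos h0 hμ n
  have : ∀ i, ∃ k : Fin (μ n), v i = u i + (lamSeq lam0 μ n : ℤ) * ((k : ℕ) : ℤ) := by
    intro i
    obtain ⟨a, ha⟩ := hu i
    obtain ⟨b, hb⟩ := hv.1 i
    obtain ⟨h1, h2⟩ := hv.2 i
    simp only [Nat.add_sub_cancel] at hb
    have e : (lamSeq lam0 μ (n + 1) : ℤ) = (lamSeq lam0 μ n : ℤ) * μ n := by
      simp [lamSeq]
    rw [e] at ha h2
    have hl' : (0 : ℤ) < lamSeq lam0 μ n := by exact_mod_cast hl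
    set L : ℤ := (lamSeq lam0 μ n : ℤ)
    have k0 : 0 ≤ b - μ n * a := by
      by_contra hh
      push Not at hh
      nlinarith
    have k1 : b - μ n * a < μ n := by
      by_contra hh
      push Not at hh
      nlinarith
    refine ⟨⟨(b - μ n * a).toNat, by omega⟩, ?_⟩
    simp only [Int.toNat_of_nonneg k0]
    rw [ha, hb]; ring
  choose k hk using this
  exact ⟨k, funext hk⟩

lemma step_bound {Ω : Type*} [MeasureSpace Ω] {d : ℕ} {lam0 : ℕ} {μ σ : ℕ → ℕ}
    (h0 : 0 < lam0) (hμ : ∀ n, 0 < μ n) (hC1 : Cond1 μ σ)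
    (S : RenormScheme Ω d) (hC2 : Cond2 lam0 μ σ S) (n : ℕ) (b : ENNReal)
    (hb : ∀ u ∈ latt d (lamSeq lam0 μ n), ℙ ((Aev lam0 μ σ S n u)ᶜ) ≤ b)
    (u : Fin d → ℤ) (hu : u ∈ latt d (lamSeq lam0 μ (n + 1))) :
    ℙ ((Aev lam0 μ σ S (n + 1) u)ᶜ) ≤
      ℙ ((S.aux (n + 1) u)ᶜ) + (μ n : ENNReal) ^ (2 * d) * b ^ 2 := by
  let f : (Fin d → Fin (μ n)) → (Fin d → ℤ) :=
    fun k i => u i + (lamSeq lam0 μ n : ℤ) * ((k i : ℕ) : ℤ)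
  let E : (Fin d → Fin (μ n)) × (Fin d → Fin (μ n)) → Set Ω := fun p =>
    {ω | (f p.1 ∈ lamBox lam0 μ (n + 1) u ∧ f p.2 ∈ lamBox lam0 μ (n + 1) u ∧
      5 * σ n * lamSeq lam0 μ n ≤ normInfV (f p.1 - f p.2)) ∧
      ω ∈ (Aev lam0 μ σ S n (f p.1))ᶜ ∩ (Aev lam0 μ σ S n (f p.2))ᶜ}
  have hsub : (Aev lam0 μ σ S (n + 1) u)ᶜ ⊆ (S.aux (n + 1) u)ᶜ ∪ ⋃ p, E p := by
    intro ω hω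
    by_contra hcon
    apply hω
    simp only [Set.mem_union, Set.mem_iUnion, not_or, not_exists, Set.mem_compl_iff,
      not_not] at hcon
    refine ⟨hcon.1, ?_⟩
    simp only [Set.mem_iInter]
    intro u₁ u₂ h₁ h₂ h₃
    by_contra h4
    rw [Set.mem_union, not_or] at h4
    obtain ⟨k₁, e₁⟩ := lamBox_param h0 hμ n u u₁ hu h₁
    obtain ⟨k₂, e₂⟩ := lamBox_param h0 hμ n u u₂ hu h₂
    subst e₁ e₂
    exact hcon.2 (k₁, k₂) ⟨⟨h₁, h₂, h₃⟩, h4.1, h4.2⟩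
  have hE : ∀ p, ℙ (E p) ≤ b ^ 2 := by
    intro p
    by_cases hp : (f p.1 ∈ lamBox lam0 μ (n + 1) u ∧ f p.2 ∈ lamBox lam0 μ (n + 1) u ∧
      5 * σ n * lamSeq lam0 μ n ≤ normInfV (f p.1 - f p.2))
    · have hEp : E p = (Aev lam0 μ σ S n (f p.1))ᶜ ∩ (Aev lam0 μ σ S n (f p.2))ᶜ := by
        ext ω
        exact ⟨fun h => h.2, fun h => ⟨hp, h⟩⟩
      have hr : 0 < σ n * lamSeq lam0 μ n :=
        Nat.mul_pos (by have := (hC1 n).2; omega) (lamSeq_pos h0 hμ n)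
      have hdis := suppBox_disj (f p.1) (f p.2) _ hr (by rw [← mul_assoc]; exact hp.2.2)
      have hind := (ProbabilityTheory.Indep_iff _ _ _).1 (hC2 _ _ hdis) _ _
        (MeasurableSet.compl (Aev_meas hC1 S _ n (f p.1) hp.1.1 subset_rfl))
        (MeasurableSet.compl (Aev_meas hC1 S _ n (f p.2) hp.2.1.1 subset_rfl))
      rw [hEp, hind, sq]
      exact mul_le_mul' (hb _ hp.1.1) (hb _ hp.2.1.1)
    · have hEp : E p = ∅ := by
        ext ω
        exact ⟨fun h => hp h.1, fun h => h.elim⟩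
      rw [hEp]; simp
  calc ℙ ((Aev lam0 μ σ S (n + 1) u)ᶜ) ≤ ℙ ((S.aux (n + 1) u)ᶜ ∪ ⋃ p, E p) :=
        measure_mono hsub
    _ ≤ ℙ ((S.aux (n + 1) u)ᶜ) + ℙ (⋃ p, E p) := measure_union_le _ _
    _ ≤ ℙ ((S.aux (n + 1) u)ᶜ) + ∑ p, ℙ (E p) := by
        gcongr; exact measure_iUnion_fintype_le _ _
    _ ≤ ℙ ((S.aux (n + 1) u)ᶜ) + ∑ _p : (Fin d → Fin (μ n)) × (Fin d → Fin (μ n)), b ^ 2 := by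
        gcongr; exact hE _
    _ = _ := by
        simp [two_mul, pow_add]

theorem stmt14 (d : ℕ) (hd : 2 ≤ d) (μ σ : ℕ → ℕ)
    (hμ : ∀ n, 0 < μ n) (hσ : ∀ n, 0 < σ n)
    (hC1 : Cond1 μ σ)
    (hC3 : Summable fun n : ℕ => Real.logb 2 (μ n) / 2 ^ n) :
    ∃ ε₀ : ℝ, 0 < ε₀ ∧
      ∀ (Ω : Type) [MeasureSpace Ω] [IsProbabilityMeasure (ℙ : Measure Ω)]
        (lam0 : ℕ), 0 < lam0 → ∀ S : RenormScheme Ω d, Cond2 lam0 μ σ S →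
        ((⨆ u ∈ latt d (lamSeq lam0 μ 0), ℙ ((S.seed u)ᶜ)) < ENNReal.ofReal ε₀) →
        (∀ n : ℕ, 1 ≤ n → (⨆ u ∈ latt d (lamSeq lam0 μ n), ℙ ((S.aux n u)ᶜ)) <
          ENNReal.ofReal ((2 : ℝ) ^ (-((2 : ℝ) ^ n) / ε₀))) →
        ∀ n : ℕ, (⨆ u ∈ latt d (lamSeq lam0 μ n), ℙ ((Aev lam0 μ σ S n u)ᶜ)) <
          ENNReal.ofReal ((2 : ℝ) ^ (-((2 : ℝ) ^ n))) := by
  set s : ℕ → ℝ := fun k => (1 + 2 * d * Real.logb 2 (μ k)) / 2 ^ (k + 1) with hs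
  have hs0 : ∀ k, 0 ≤ s k := by
    intro k
    have : 0 ≤ Real.logb 2 (μ k) :=
      Real.logb_nonneg (by norm_num) (by exact_mod_cast hμ k)
    simp only [hs]; positivity
  have hsum : Summable s := by
    have h1 : Summable fun k : ℕ => (1 / 2 : ℝ) * (1 / 2) ^ k :=
      (summable_geometric_two).mul_left _
    have h2 := h1.add (hC3.mul_left (d : ℝ))
    refine h2.congr fun k => ?_
    simp only [hs]
    rw [pow_succ, one_div_pow]
    field_simp
  set T : ℝ := ∑' k, s k with hT
  have hT0 : 0 ≤ T := tsum_nonneg hs0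
  set x : ℕ → ℝ := fun n => 2 + T - ∑ k ∈ Finset.range n, s k with hx
  have hx2 : ∀ n, 2 ≤ x n := by
    intro n
    have := hsum.sum_le_tsum (Finset.range n) (fun i _ => hs0 i)
    simp only [hx]; linarith
  have hxT : ∀ n, x n ≤ 2 + T := by
    intro n
    have := Finset.sum_nonneg (s := Finset.range n) (fun i _ => hs0 i)
    simp only [hx]; linarith
  have hinv : 3 + T ≤ (2 : ℝ) ^ (3 + T) := by
    have h := one_add_mul_self_le_rpow_one_add (s := 1) (by norm_num) (p := 3 + T) (by linarith)
    norm_num at h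
    linarith
  refine ⟨(2 : ℝ) ^ (-(3 + T)), by positivity, ?_⟩
  intro Ω _ _ lam0 h0 S hC2 hseed haux
  have key : ∀ n, ∀ u ∈ latt d (lamSeq lam0 μ n),
      ℙ ((Aev lam0 μ σ S n u)ᶜ) ≤ ENNReal.ofReal ((2 : ℝ) ^ (-((2 : ℝ) ^ n * x n))) := by
    intro n
    induction n with
    | zero =>
      intro u hu
      have h1 : ℙ ((S.seed u)ᶜ) ≤ _ :=
        le_iSup₂ (f := fun u (_ : u ∈ latt d (lamSeq lam0 μ 0)) => ℙ ((S.seed u)ᶜ)) u hu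
      refine (h1.trans hseed.le).trans (ENNReal.ofReal_le_ofReal ?_)
      apply Real.rpow_le_rpow_of_exponent_le (by norm_num)
      have := hxT 0
      simp only [pow_zero, one_mul]
      linarith
    | succ n ih =>
      intro u hu
      have h1 : ℙ ((S.aux (n + 1) u)ᶜ) ≤ _ :=
        le_iSup₂ (f := fun u (_ : u ∈ latt d (lamSeq lam0 μ (n + 1))) => ℙ ((S.aux (n + 1) u)ᶜ))
          u hu
      have h2 := h1.trans (haux (n + 1) (by omega)).le
      have h3 := step_bound h0 hμ hC1 S hC2 n _ ih u hu
      have hp1 : (1 : ℝ) ≤ 2 ^ (n + 1) := one_le_pow₀ (by norm_num)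
      set y : ℝ := (2 : ℝ) ^ (-((2 : ℝ) ^ (n + 1) * x (n + 1)) - 1) with hy
      have hq : (2 : ℝ) ^ (-((2 : ℝ) ^ (n + 1)) / (2 : ℝ) ^ (-(3 + T))) ≤ y := by
        apply Real.rpow_le_rpow_of_exponent_le (by norm_num)
        rw [Real.rpow_neg (by norm_num), div_inv_eq_mul]
        have := hxT (n + 1)
        nlinarith
      have hμr : (0 : ℝ) < μ n := by exact_mod_cast hμ n
      have hm : (μ n : ℝ) ^ (2 * d) * ((2 : ℝ) ^ (-((2 : ℝ) ^ n * x n))) ^ 2 = y := by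
        have e1 : (μ n : ℝ) ^ (2 * d) = (2 : ℝ) ^ (Real.logb 2 (μ n) * ((2 * d : ℕ) : ℝ)) := by
          rw [Real.rpow_mul (by norm_num), Real.rpow_logb (by norm_num) (by norm_num) hμr,
            Real.rpow_natCast]
        have e2 : ((2 : ℝ) ^ (-((2 : ℝ) ^ n * x n))) ^ 2
            = (2 : ℝ) ^ (-((2 : ℝ) ^ n * x n) * ((2 : ℕ) : ℝ)) := by
          rw [Real.rpow_mul (by norm_num), Real.rpow_natCast]
        rw [e1, e2, ← Real.rpow_add (by norm_num), hy]
        congr 1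
        have e3 : x (n + 1) = x n - s n := by
          simp only [hx, Finset.sum_range_succ]; ring
        have e4 : (2 : ℝ) ^ (n + 1) * s n = 1 + 2 * d * Real.logb 2 (μ n) := by
          simp only [hs]; field_simp
        rw [e3]
        push_cast
        linear_combination -e4
      have hyy : y + y = (2 : ℝ) ^ (-((2 : ℝ) ^ (n + 1) * x (n + 1))) := by
        rw [hy, Real.rpow_sub (by norm_num), Real.rpow_one]; ring
      have hy0 : 0 ≤ y := by positivity
      calc _ ≤ _ := h3
        _ ≤ ENNReal.ofReal y + ENNReal.ofReal y := by
          refine add_le_add (h2.trans (ENNReal.ofReal_le_ofReal hq)) (le_of_eq ?_)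
          rw [← hm, ENNReal.ofReal_mul (by positivity), ENNReal.ofReal_pow (by positivity),
            ENNReal.ofReal_pow (by positivity), ENNReal.ofReal_natCast]
        _ = _ := by rw [← ENNReal.ofReal_add hy0 hy0, hyy]
  intro n
  refine lt_of_le_of_lt (iSup₂_le (key n)) ?_
  rw [ENNReal.ofReal_lt_ofReal_iff (by positivity)]
  apply Real.rpow_lt_rpow_of_exponent_lt (by norm_num)
  have : (0 : ℝ) < 2 ^ n := by positivity
  nlinarith [hx2 n]

end
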